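/- If p, q ∈ R satisfy p ≠ 0 and D(p) = q·p, then q ∈ F{Y}, i.e. q involves no X-variables. (This holds because the total degree of p with respect to the X_{ij} is unchanged by D.) -/

import Mathlib

open MvPolynomial

/-- The polynomial ring `R = F{Y_ij}[X_ij]`: multivariate polynomials over `F` in the
variables `Y i j k` (indexed by `Sum.inl (i,j,k)`) and `X i j` (indexed by `Sum.inr (i,j)`). -/
abbrev Rgen (F : Type*) [Field F] (n : ℕ) : Type _ :=
  MvPolynomial ((Fin n × Fin n × ℕ) ⊕ (Fin n × Fin n)) F

/-- `det[X]`: the determinant of the `n × n` matrix whose `(i,j)` entry is the variable `X i j`. -/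
noncomputable def detX (F : Type*) [Field F] (n : ℕ) : Rgen F n :=
  (Matrix.of fun i j : Fin n => X (Sum.inr (i, j))).det

/-- The `F`-subalgebra `F{Y}` of `R` generated by all the variables `Y i j k`. -/
noncomputable def FY (F : Type*) [Field F] (n : ℕ) : Subalgebra F (Rgen F n) :=
  Algebra.adjoin F (Set.range fun v : Fin n × Fin n × ℕ => X (Sum.inl v))

/-- The `F`-subalgebra `F[X]` of `R` generated by all the variables `X i j`. -/
noncomputable def FX (F : Type*) [Field F] (n : ℕ) : Subalgebra F (Rgen F n) :=
  Algebra.adjoin F (Set.range fun v : Fin n × Fin n => X (Sum.inr v))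

/-!
Give each `X i j` weight one and every other variable weight zero. As `D` sends coefficients and
variables to polynomials of no larger weighted degree, the Leibniz rule shows that it raises the
weighted degree of no polynomial. Over a domain weighted degrees add under multiplication, since the
top homogeneous components have a nonzero product. Hence `D p = q * p` forces `q` to have weighted
degree zero.
-/

section WeightedTotalDegree

variable {R σ M : Type*} [CommSemiring R] [AddCommMonoid M] {w : σ → M}

section SemilatticeSup

variable [SemilatticeSup M] [OrderBot M]

theorem weightedTotalDegree_add_le (p q : MvPolynomial σ R) :
    weightedTotalDegree w (p + q) ≤ weightedTotalDegree w p ⊔ weightedTotalDegree w q :=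
  AddMonoidAlgebra.supDegree_add_le

theorem weightedTotalDegree_sum_le {ι : Type*} (s : Finset ι) (f : ι → MvPolynomial σ R) :
    weightedTotalDegree w (∑ i ∈ s, f i) ≤ s.sup fun i => weightedTotalDegree w (f i) :=
  AddMonoidAlgebra.supDegree_sum_le

theorem weightedTotalDegree_mul_le [IsOrderedAddMonoid M] (p q : MvPolynomial σ R) :
    weightedTotalDegree w (p * q) ≤ weightedTotalDegree w p + weightedTotalDegree w q :=
  AddMonoidAlgebra.supDegree_mul_le (map_add (Finsupp.weight w))

theorem weightedTotalDegree_le_of_isWeightedHomogeneous {p : MvPolynomial σ R} {m : M}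
    (hp : IsWeightedHomogeneous w p m) : weightedTotalDegree w p ≤ m :=
  Finset.sup_le fun _ hd => (hp (mem_support_iff.1 hd)).le

theorem weightedHomogeneousComponent_mul_of_weightedTotalDegree_le [IsOrderedCancelAddMonoid M]
    {p q : MvPolynomial σ R} {a b : M} (hp : weightedTotalDegree w p ≤ a)
    (hq : weightedTotalDegree w q ≤ b) :
    weightedHomogeneousComponent w (a + b) (p * q) =
      weightedHomogeneousComponent w a p * weightedHomogeneousComponent w b q := by
  classical
  ext d
  rw [coeff_weightedHomogeneousComponent]
  split_ifs with hd
  · simp only [coeff_mul, coeff_weightedHomogeneousComponent]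
    refine Finset.sum_congr rfl fun ⟨x, y⟩ hxy => ?_
    rw [Finset.HasAntidiagonal.mem_antidiagonal] at hxy
    by_cases hx : coeff x p = 0
    · simp only [hx, zero_mul, ite_self]
    by_cases hy : coeff y q = 0
    · simp only [hy, mul_zero, ite_self]
    have hxle := (le_weightedTotalDegree w (mem_support_iff.2 hx)).trans hp
    have hyle := (le_weightedTotalDegree w (mem_support_iff.2 hy)).trans hq
    obtain ⟨hxa, hyb⟩ := (add_eq_add_iff_eq_and_eq hxle hyle).1 (by rw [← map_add, hxy, hd])
    rw [if_pos hxa, if_pos hyb]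
  · exact (((weightedHomogeneousComponent_isWeightedHomogeneous a p).mul
      (weightedHomogeneousComponent_isWeightedHomogeneous b q)).coeff_eq_zero d hd).symm

theorem mem_supported_of_weightedTotalDegree_eq_zero [CanonicallyOrderedAdd M]
    [IsOrderedAddMonoid M] {p : MvPolynomial σ R} (hp : weightedTotalDegree w p = 0) :
    p ∈ supported R {s | w s = 0} := by
  refine mem_supported.2 fun s hs => ?_
  obtain ⟨d, hd, hsd⟩ := (mem_vars_iff_mem_support s).1 hs
  have hle := (Finsupp.le_weight_of_ne_zero' w (Finsupp.mem_support_iff.1 hsd)).trans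
    ((le_weightedTotalDegree w hd).trans_eq hp)
  exact nonpos_iff_eq_zero.1 hle

end SemilatticeSup

section LinearOrder

variable [LinearOrder M] [OrderBot M]

theorem weightedHomogeneousComponent_weightedTotalDegree_ne_zero {p : MvPolynomial σ R}
    (hp : p ≠ 0) : weightedHomogeneousComponent w (weightedTotalDegree w p) p ≠ 0 := by
  obtain ⟨d, hd, hdeg⟩ :=
    Finset.exists_mem_eq_sup p.support (support_nonempty.2 hp) (Finsupp.weight w)
  refine ne_zero_iff.2 ⟨d, ?_⟩
  rw [coeff_weightedHomogeneousComponent, weightedTotalDegree, if_pos hdeg.symm]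
  exact mem_support_iff.1 hd

theorem weightedTotalDegree_mul [NoZeroDivisors R] [IsOrderedCancelAddMonoid M]
    {p q : MvPolynomial σ R} (hp : p ≠ 0) (hq : q ≠ 0) :
    weightedTotalDegree w (p * q) = weightedTotalDegree w p + weightedTotalDegree w q := by
  refine (weightedTotalDegree_mul_le p q).antisymm (not_lt.1 fun hlt => ?_)
  have htop := weightedHomogeneousComponent_mul_of_weightedTotalDegree_le
    (le_refl (weightedTotalDegree w p)) (le_refl (weightedTotalDegree w q))
  rw [weightedHomogeneousComponent_eq_zero _ _ hlt] at htop
  exact mul_ne_zero (weightedHomogeneousComponent_weightedTotalDegree_ne_zero hp)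
    (weightedHomogeneousComponent_weightedTotalDegree_ne_zero hq) htop.symm

end LinearOrder

end WeightedTotalDegree

section Derivation

variable {k R σ M : Type*} [CommSemiring k] [CommSemiring R] [Algebra k (MvPolynomial σ R)]
  [AddCommMonoid M] {w : σ → M} (D : Derivation k (MvPolynomial σ R) (MvPolynomial σ R))

theorem weightedTotalDegree_derivation_monomial_le
    [SemilatticeSup M] [OrderBot M] [IsOrderedAddMonoid M]
    (hC : ∀ r : R, weightedTotalDegree w (D (C r)) ≤ 0)
    (hX : ∀ s : σ, weightedTotalDegree w (D (X s)) ≤ w s) (d : σ →₀ ℕ) (r : R) :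
    weightedTotalDegree w (D (monomial d r)) ≤ Finsupp.weight w d := by
  classical
  obtain ⟨t, rfl⟩ := Multiset.toFinsupp.surjective d
  induction t using Multiset.induction with
  | empty => simpa using hC r
  | cons s t ih =>
    have hmon := weightedTotalDegree_le_of_isWeightedHomogeneous
      (isWeightedHomogeneous_monomial w (Multiset.toFinsupp t) r rfl)
    have hs := weightedTotalDegree_le_of_isWeightedHomogeneous (isWeightedHomogeneous_X R w s)
    rw [← Multiset.singleton_add, map_add, Multiset.toFinsupp_singleton, monomial_single_add,
      pow_one, Derivation.leibniz, smul_eq_mul, smul_eq_mul, map_add, Finsupp.weight_single,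
      one_smul]
    refine (weightedTotalDegree_add_le _ _).trans (sup_le ?_ ?_)
    · exact (weightedTotalDegree_mul_le _ _).trans (add_le_add hs ih)
    · rw [mul_comm]
      exact (weightedTotalDegree_mul_le _ _).trans (add_le_add (hX s) hmon)

theorem weightedTotalDegree_derivation_le
    [SemilatticeSup M] [OrderBot M] [IsOrderedAddMonoid M]
    (hC : ∀ r : R, weightedTotalDegree w (D (C r)) ≤ 0)
    (hX : ∀ s : σ, weightedTotalDegree w (D (X s)) ≤ w s) (p : MvPolynomial σ R) :
    weightedTotalDegree w (D p) ≤ weightedTotalDegree w p := by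
  conv_lhs => rw [p.as_sum, map_sum]
  refine (weightedTotalDegree_sum_le _ _).trans (Finset.sup_le fun d hd => ?_)
  exact (weightedTotalDegree_derivation_monomial_le D hC hX d _).trans
    (le_weightedTotalDegree w hd)

theorem stmt_6_general [NoZeroDivisors R] [LinearOrder M] [OrderBot M]
    [IsOrderedCancelAddMonoid M] [CanonicallyOrderedAdd M]
    (hC : ∀ r : R, weightedTotalDegree w (D (C r)) ≤ 0)
    (hX : ∀ s : σ, weightedTotalDegree w (D (X s)) ≤ w s)
    {p q : MvPolynomial σ R} (hp : p ≠ 0) (hDp : D p = q * p) :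
    q ∈ supported R {s | w s = 0} := by
  refine mem_supported_of_weightedTotalDegree_eq_zero ?_
  rcases eq_or_ne q 0 with rfl | hq
  · rw [weightedTotalDegree_zero, bot_eq_zero]
  have hle := weightedTotalDegree_derivation_le D hC hX p
  rw [hDp, weightedTotalDegree_mul hq hp] at hle
  exact nonpos_iff_eq_zero.1 (le_of_add_le_add_right (hle.trans_eq (zero_add _).symm))

end Derivation

/-- A function satisfying the sum and product rules, bundled as a derivation over `ℤ` so that the
derivation API applies to it. -/
def derivationOfLeibniz {A : Type*} [CommRing A] (D : A → A)
    (hD_add : ∀ a b, D (a + b) = D a + D b) (hD_mul : ∀ a b, D (a * b) = D a * b + a * D b) :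
    Derivation ℤ A A :=
  .mk' (AddMonoidHom.mk' D hD_add).toIntLinearMap fun a b => by
    simp [hD_mul, mul_comm, add_comm]

/-- The weight for which the weighted total degree on `R` is the total degree in the `X i j`. -/
def weightX (n : ℕ) : (Fin n × Fin n × ℕ) ⊕ (Fin n × Fin n) → ℕ :=
  Sum.elim 0 1

section WeightX

variable {F : Type*} [Field F] {n : ℕ}

theorem FY_eq_supported : FY F n = supported F {s | weightX n s = 0} := by
  have hrange : {s | weightX n s = 0} = Set.range Sum.inl := by
    ext (v | v) <;> simp [weightX]
  rw [supported_eq_adjoin_X, hrange, ← Set.range_comp]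
  rfl

theorem weightedTotalDegree_weightX_map_X_le {D : Rgen F n → Rgen F n}
    (hD_Y : ∀ (i j : Fin n) (k : ℕ),
      D (X (Sum.inl (i, j, k))) = X (Sum.inl (i, j, k + 1)))
    (hD_X : ∀ i j : Fin n,
      D (X (Sum.inr (i, j))) = ∑ l : Fin n, X (Sum.inl (i, l, 0)) * X (Sum.inr (l, j)))
    (s : (Fin n × Fin n × ℕ) ⊕ (Fin n × Fin n)) :
    weightedTotalDegree (weightX n) (D (X s)) ≤ weightX n s := by
  apply weightedTotalDegree_le_of_isWeightedHomogeneous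
  rcases s with ⟨i, j, k⟩ | ⟨i, j⟩
  · rw [hD_Y]
    exact isWeightedHomogeneous_X F (weightX n) (Sum.inl (i, j, k + 1))
  · rw [hD_X]
    exact .sum _ _ _ fun l _ => (isWeightedHomogeneous_X F (weightX n) (Sum.inl (i, l, 0))).mul
      (isWeightedHomogeneous_X F (weightX n) (Sum.inr (l, j)))

end WeightX

/-- If `p ≠ 0` and `D p = q * p`, then the cofactor `q` lies in `F{Y}`,
i.e. involves no `X`-variables. -/
theorem stmt_6
    {F : Type*} [Field F] [CharZero F] (d : F → F)
    (hd_add : ∀ a b : F, d (a + b) = d a + d b)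
    (hd_mul : ∀ a b : F, d (a * b) = d a * b + a * d b)
    (n : ℕ) (hn : 1 ≤ n)
    (D : Rgen F n → Rgen F n)
    (hD_add : ∀ a b, D (a + b) = D a + D b)
    (hD_mul : ∀ a b, D (a * b) = D a * b + a * D b)
    (hD_C : ∀ f : F, D (C f) = C (d f))
    (hD_Y : ∀ (i j : Fin n) (k : ℕ),
      D (X (Sum.inl (i, j, k))) = X (Sum.inl (i, j, k + 1)))
    (hD_X : ∀ i j : Fin n,
      D (X (Sum.inr (i, j))) = ∑ l : Fin n, X (Sum.inl (i, l, 0)) * X (Sum.inr (l, j)))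
    (p q : Rgen F n) (hp : p ≠ 0) (hDp : D p = q * p) :
    q ∈ FY F n := by
  have hC (f : F) : weightedTotalDegree (weightX n) (D (C f)) ≤ 0 :=
    weightedTotalDegree_le_of_isWeightedHomogeneous (hD_C f ▸ isWeightedHomogeneous_C _ (d f))
  rw [FY_eq_supported]
  exact stmt_6_general (derivationOfLeibniz D hD_add hD_mul) hC
    (weightedTotalDegree_weightX_map_X_le hD_Y hD_X) hp hDp
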